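/- Let G and G' be graphs on vertex sets {1,…,t} and {1,…,t'} respectively, with edge sets E and E', and let U ∈ R^{t×n} and U' ∈ R^{t'×n} have nonnegative entries with each row summing to 1. If seg(G,U) ⊆ seg(G',U'), then SDD^G_+(U) ⊆ SDD^{G'}_+(U'). -/

import Mathlib

open Matrix Set

noncomputable section

/-- The embedding `ι_{ij} : S² → Sⁿ` placing a 2×2 symmetric matrix into
rows/columns `i, j` with zeros elsewhere. -/
def iota {n : ℕ} (i j : Fin n) (S : Matrix (Fin 2) (Fin 2) ℝ) :
    Matrix (Fin n) (Fin n) ℝ :=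
  Matrix.of fun r s =>
    (if r = i ∧ s = i then S 0 0 else 0) +
    (if r = i ∧ s = j then S 0 1 else 0) +
    (if r = j ∧ s = i then S 1 0 else 0) +
    (if r = j ∧ s = j then S 1 1 else 0)

/-- The cone `SDDⁿ = Σ_{i<j} ι_{ij}(S²₊)` of scaled diagonally dominant matrices. -/
def SDD (n : ℕ) : Set (Matrix (Fin n) (Fin n) ℝ) :=
  {X | ∃ S : Fin n → Fin n → Matrix (Fin 2) (Fin 2) ℝ,
    (∀ i j : Fin n, (S i j).PosSemidef) ∧
    X = ∑ i : Fin n, ∑ j : Fin n, if i < j then iota i j (S i j) else 0}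

/-- `Nⁿ`: symmetric entrywise nonnegative matrices. -/
def NonnegMat (n : ℕ) : Set (Matrix (Fin n) (Fin n) ℝ) :=
  {X | X.IsSymm ∧ ∀ i j, 0 ≤ X i j}

/-- Dual cone within the space of symmetric matrices, w.r.t. the trace inner product. -/
def dualCone {n : ℕ} (C : Set (Matrix (Fin n) (Fin n) ℝ)) :
    Set (Matrix (Fin n) (Fin n) ℝ) :=
  {Y | Y.IsSymm ∧ ∀ X ∈ C, 0 ≤ (X * Y).trace}

open scoped Classical in
/-- `SDD^G = Σ_{{i,j}∈E} ι_{ij}(S²₊)` (equal to `{0}` if `E = ∅`). -/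
def SDDG {t : ℕ} (G : SimpleGraph (Fin t)) : Set (Matrix (Fin t) (Fin t) ℝ) :=
  {X | ∃ S : Fin t → Fin t → Matrix (Fin 2) (Fin 2) ℝ,
    (∀ i j : Fin t, (S i j).PosSemidef) ∧
    X = ∑ i : Fin t, ∑ j : Fin t, if i < j ∧ G.Adj i j then iota i j (S i j) else 0}

/-- `SDD^G₊ = SDD^G ∩ Nᵗ`. -/
def SDDGplus {t : ℕ} (G : SimpleGraph (Fin t)) : Set (Matrix (Fin t) (Fin t) ℝ) :=
  SDDG G ∩ NonnegMat t

/-- `SDD^G₊(U) = Uᵀ (SDD^G₊) U`. -/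
def SDDGplusU {t n : ℕ} (G : SimpleGraph (Fin t)) (U : Matrix (Fin t) (Fin n) ℝ) :
    Set (Matrix (Fin n) (Fin n) ℝ) :=
  {X | ∃ Y ∈ SDDGplus G, X = Uᵀ * Y * U}

/-- `seg(G,U) = ∪_{{i,j}∈E} [uᵢ, uⱼ]`. -/
def seg {t n : ℕ} (G : SimpleGraph (Fin t)) (U : Matrix (Fin t) (Fin n) ℝ) :
    Set (Fin n → ℝ) :=
  {v | ∃ i j : Fin t, G.Adj i j ∧ v ∈ segment ℝ (U i) (U j)}

/-!
The cone `SDD^G₊(U)` is generated by the rank-one matrices `v vᵀ` with `v ∈ seg(G,U)`, so it is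
monotone in `seg(G,U)`. The off-diagonal entry of an edge `{i,j}` in a matrix of `SDD^G` comes from
the summand of that edge alone. Hence all summands of a matrix in `SDD^G₊` are nonnegative as well,
and a nonnegative positive semidefinite `2×2` matrix is a sum of matrices `v vᵀ` with `v ≥ 0`.
-/

section Congruence

variable {l m n R : Type*} [Fintype l] [Fintype m] [CommSemiring R]

/-- The congruence `X ↦ Aᵀ X A` as a linear map; both `ι_{ij}` and the passage from `SDD^G₊` to
`SDD^G₊(U)` are instances of it. -/
def congruenceMap (A : Matrix m n R) : Matrix m m R →ₗ[R] Matrix n n R :=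
  mulRightLinearMap n R A ∘ₗ mulLeftLinearMap m R Aᵀ

lemma congruenceMap_apply (A : Matrix m n R) (X : Matrix m m R) :
    congruenceMap A X = Aᵀ * X * A :=
  rfl

lemma congruenceMap_congruenceMap (A : Matrix m n R) (B : Matrix l m R) (X : Matrix l l R) :
    congruenceMap A (congruenceMap B X) = congruenceMap (B * A) X := by
  simp only [congruenceMap_apply, transpose_mul, Matrix.mul_assoc]

lemma congruenceMap_vecMulVec_self (A : Matrix m n R) (v : m → R) :
    congruenceMap A (vecMulVec v v) = vecMulVec (v ᵥ* A) (v ᵥ* A) := by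
  rw [congruenceMap_apply, mul_vecMulVec, vecMulVec_mul, mulVec_transpose]

end Congruence

section RankOneCone

variable {n : Type*}

/-- The convex cone generated by the rank-one matrices `v vᵀ` with `v ∈ s`. For `s` the nonnegative
orthant it consists of the completely positive matrices. -/
def rankOneCone {R : Type*} [CommSemiring R] [PartialOrder R] [IsOrderedRing R]
    (s : Set (n → R)) : PointedCone R (Matrix n n R) :=
  PointedCone.hull R ((fun v => vecMulVec v v) '' s)

section OrderedSemiring

variable {R : Type*} [CommSemiring R] [PartialOrder R] [IsOrderedRing R] {s t : Set (n → R)}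

lemma rankOneCone_le_iff {C : PointedCone R (Matrix n n R)} :
    rankOneCone s ≤ C ↔ ∀ v ∈ s, vecMulVec v v ∈ C :=
  Submodule.span_le.trans image_subset_iff

lemma vecMulVec_self_mem_rankOneCone {v : n → R} (hv : v ∈ s) :
    vecMulVec v v ∈ rankOneCone s :=
  rankOneCone_le_iff.1 le_rfl v hv

lemma rankOneCone_mono (hst : s ⊆ t) : rankOneCone s ≤ rankOneCone t :=
  Submodule.span_mono (image_mono hst)

lemma vecMulVec_smul_self_mem_rankOneCone {v : n → R} (hv : v ∈ s) {c : R} (hc : 0 ≤ c) :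
    vecMulVec (c • v) (c • v) ∈ rankOneCone s := by
  rw [smul_vecMulVec, vecMulVec_smul]
  exact PointedCone.smul_mem _ hc
    (PointedCone.smul_mem _ hc (vecMulVec_self_mem_rankOneCone hv))

end OrderedSemiring

lemma vecMulVec_self_mem_rankOneCone_segment {𝕜 : Type*} [Field 𝕜] [LinearOrder 𝕜]
    [IsStrictOrderedRing 𝕜] {a b : 𝕜} (ha : 0 ≤ a) (hb : 0 ≤ b) (x y : n → 𝕜) :
    vecMulVec (a • x + b • y) (a • x + b • y) ∈ rankOneCone (segment 𝕜 x y) := by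
  rcases (add_nonneg ha hb).eq_or_lt' with hab | hab
  · obtain ⟨rfl, rfl⟩ := (add_eq_zero_iff_of_nonneg ha hb).1 hab
    simp only [zero_smul, add_zero, zero_vecMulVec, zero_mem]
  · have hmem : (a / (a + b)) • x + (b / (a + b)) • y ∈ segment 𝕜 x y :=
      ⟨_, _, div_nonneg ha hab.le, div_nonneg hb hab.le,
        by rw [← add_div, div_self hab.ne'], rfl⟩
    have hscale : a • x + b • y = (a + b) • ((a / (a + b)) • x + (b / (a + b)) • y) := by
      rw [smul_add, smul_smul, smul_smul, mul_div_cancel₀ _ hab.ne', mul_div_cancel₀ _ hab.ne']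
    rw [hscale]
    exact vecMulVec_smul_self_mem_rankOneCone hmem hab.le

/-- Cholesky factorization. If `S 0 0 = 0`, then `S 0 1 = 0`, so that the value `0` of the quotients
by `√0` and `0` is the correct one. -/
lemma eq_vecMulVec_add_vecMulVec_of_posSemidef {S : Matrix (Fin 2) (Fin 2) ℝ}
    (hS : S.PosSemidef) :
    S = vecMulVec ![√(S 0 0), S 0 1 / √(S 0 0)] ![√(S 0 0), S 0 1 / √(S 0 0)] +
      vecMulVec ![0, √(S 1 1 - S 0 1 * S 0 1 / S 0 0)]
        ![0, √(S 1 1 - S 0 1 * S 0 1 / S 0 0)] := by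
  have hsymm : S 1 0 = S 0 1 := by simpa only [star_trivial] using hS.isHermitian.apply 0 1
  have h00 : 0 ≤ S 0 0 := hS.diag_nonneg
  have hdet : S 0 1 * S 0 1 ≤ S 1 1 * S 0 0 := by
    have hdet_nonneg := hS.det_nonneg
    rw [det_fin_two, hsymm] at hdet_nonneg
    linarith
  have hschur : S 0 1 * S 0 1 / S 0 0 ≤ S 1 1 := div_le_of_le_mul₀ h00 hS.diag_nonneg hdet
  have hoff : √(S 0 0) * (S 0 1 / √(S 0 0)) = S 0 1 := by
    refine mul_div_cancel_of_imp' fun hsqrt => ?_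
    rw [(Real.sqrt_eq_zero h00).1 hsqrt, mul_zero] at hdet
    exact mul_self_eq_zero.1 (hdet.antisymm (mul_self_nonneg _))
  ext k l
  fin_cases k <;> fin_cases l <;>
    simp [hsymm, hoff, mul_comm (S 0 1 / √(S 0 0)), Real.mul_self_sqrt, h00, hschur,
      div_mul_div_comm]

lemma mem_rankOneCone_Ici_zero_of_posSemidef {S : Matrix (Fin 2) (Fin 2) ℝ}
    (hS : S.PosSemidef) (h01 : 0 ≤ S 0 1) : S ∈ rankOneCone (Ici 0) := by
  rw [eq_vecMulVec_add_vecMulVec_of_posSemidef hS]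
  refine add_mem (vecMulVec_self_mem_rankOneCone ?_) (vecMulVec_self_mem_rankOneCone ?_)
  · exact Fin.forall_fin_two.2 ⟨Real.sqrt_nonneg _, div_nonneg h01 (Real.sqrt_nonneg _)⟩
  · exact Fin.forall_fin_two.2 ⟨le_rfl, Real.sqrt_nonneg _⟩

lemma congruenceMap_mem_rankOneCone_segment {S : Matrix (Fin 2) (Fin 2) ℝ}
    (hS : S.PosSemidef) (h01 : 0 ≤ S 0 1) (A : Matrix (Fin 2) n ℝ) :
    congruenceMap A S ∈ rankOneCone (segment ℝ (A 0) (A 1)) := by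
  suffices rankOneCone (Ici 0) ≤
      (rankOneCone (segment ℝ (A 0) (A 1))).comap (congruenceMap A) from
    this (mem_rankOneCone_Ici_zero_of_posSemidef hS h01)
  refine rankOneCone_le_iff.2 fun v hv => ?_
  rw [PointedCone.mem_comap, congruenceMap_vecMulVec_self, vecMul_eq_sum, Fin.sum_univ_two]
  exact vecMulVec_self_mem_rankOneCone_segment (hv 0) (hv 1) _ _

end RankOneCone

section Iota

variable {t n : ℕ}

lemma iota_eq_congruenceMap (i j : Fin t) (S : Matrix (Fin 2) (Fin 2) ℝ) :
    iota i j S = congruenceMap ((1 : Matrix (Fin t) (Fin t) ℝ).submatrix ![i, j] id) S := by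
  ext r s
  simp only [iota, of_apply, congruenceMap_apply, Matrix.mul_apply, Fin.sum_univ_two,
    transpose_apply, submatrix_apply, id_eq, cons_val_zero, cons_val_one, one_apply, ite_and,
    mul_ite, mul_one, mul_zero]
  grind

lemma congruenceMap_iota (U : Matrix (Fin t) (Fin n) ℝ) (i j : Fin t)
    (S : Matrix (Fin 2) (Fin 2) ℝ) :
    congruenceMap U (iota i j S) = congruenceMap (U.submatrix ![i, j] id) S := by
  rw [iota_eq_congruenceMap, congruenceMap_congruenceMap]
  congr 2
  exact one_submatrix_mul _ (Equiv.refl _) U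

lemma congruenceMap_iota_mem_rankOneCone_segment {S : Matrix (Fin 2) (Fin 2) ℝ}
    (hS : S.PosSemidef) (h01 : 0 ≤ S 0 1) (U : Matrix (Fin t) (Fin n) ℝ) (i j : Fin t) :
    congruenceMap U (iota i j S) ∈ rankOneCone (segment ℝ (U i) (U j)) := by
  rw [congruenceMap_iota]
  exact congruenceMap_mem_rankOneCone_segment hS h01 (U.submatrix ![i, j] id)

lemma isSymm_iota (i j : Fin t) {S : Matrix (Fin 2) (Fin 2) ℝ} (hS : S.IsSymm) :
    (iota i j S).IsSymm := by
  simp only [IsSymm, iota_eq_congruenceMap, congruenceMap_apply, transpose_mul,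
    transpose_transpose, hS.eq, Matrix.mul_assoc]

lemma iota_nonneg (i j : Fin t) {S : Matrix (Fin 2) (Fin 2) ℝ} (hS : ∀ k l, 0 ≤ S k l)
    (r s : Fin t) : 0 ≤ iota i j S r s := by
  have hterm (p : Prop) [Decidable p] (k l : Fin 2) : 0 ≤ if p then S k l else 0 :=
    ite_nonneg (hS k l) le_rfl
  exact add_nonneg (add_nonneg (add_nonneg (hterm _ _ _) (hterm _ _ _)) (hterm _ _ _))
    (hterm _ _ _)

lemma iota_apply_of_lt {i j k l : Fin t} (hij : i < j) (hkl : k < l)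
    (S : Matrix (Fin 2) (Fin 2) ℝ) :
    iota k l S i j = if i = k ∧ j = l then S 0 1 else 0 := by
  have hk : ¬(i = k ∧ j = k) := by lia
  have hl : ¬(i = l ∧ j = l) := by lia
  have hswap : ¬(i = l ∧ j = k) := by lia
  simp only [iota, of_apply, if_neg hk, if_neg hl, if_neg hswap, zero_add, add_zero]

end Iota

section SDDG

variable {t n : ℕ} (G : SimpleGraph (Fin t))

/-- `SDD^G₊` bundled as a convex cone. -/
def sddgPlusCone : PointedCone ℝ (Matrix (Fin t) (Fin t) ℝ) where
  carrier := SDDGplus G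
  zero_mem' := by
    refine ⟨⟨0, fun _ _ => PosSemidef.zero, ?_⟩, isSymm_zero, fun _ _ => le_rfl⟩
    simp only [Pi.zero_apply, iota_eq_congruenceMap, map_zero, ite_self, Finset.sum_const_zero]
  add_mem' := by
    rintro _ _ ⟨⟨S, hS, rfl⟩, hXsymm, hX⟩ ⟨⟨T, hT, rfl⟩, hYsymm, hY⟩
    refine ⟨⟨S + T, fun i j => (hS i j).add (hT i j), ?_⟩, hXsymm.add hYsymm,
      fun i j => add_nonneg (hX i j) (hY i j)⟩
    simp only [Pi.add_apply, iota_eq_congruenceMap, map_add, ite_add_zero,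
      Finset.sum_add_distrib]
  smul_mem' := by
    rintro ⟨c, hc⟩ _ ⟨⟨S, hS, rfl⟩, hXsymm, hX⟩
    refine ⟨⟨c • S, fun i j => (hS i j).smul hc, ?_⟩, hXsymm.smul c,
      fun i j => mul_nonneg hc (hX i j)⟩
    simp only [Pi.smul_apply, iota_eq_congruenceMap, map_smul, Nonneg.mk_smul, Finset.smul_sum,
      smul_ite, smul_zero]

lemma SDDGplusU_eq_map_sddgPlusCone (U : Matrix (Fin t) (Fin n) ℝ) :
    SDDGplusU G U = (sddgPlusCone G).map (congruenceMap U) := by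
  ext X
  exact exists_congr fun Y => and_congr_right fun _ => eq_comm

variable {G}

lemma iota_mem_SDDG {i j : Fin t} (hij : i < j) (hadj : G.Adj i j)
    {S : Matrix (Fin 2) (Fin 2) ℝ} (hS : S.PosSemidef) : iota i j S ∈ SDDG G := by
  classical
  refine ⟨fun k l => if k = i ∧ l = j then S else 0, fun k l => ?_, ?_⟩
  · dsimp only
    split_ifs
    exacts [hS, PosSemidef.zero]
  · have hterm (k l : Fin t) :
        (if k < l ∧ G.Adj k l then iota k l (if k = i ∧ l = j then S else 0) else 0) =
          if k = i then if l = j then iota i j S else 0 else 0 := by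
      rw [← ite_and]
      by_cases hkl : k = i ∧ l = j
      · rw [if_pos hkl, if_pos hkl, hkl.1, hkl.2, if_pos ⟨hij, hadj⟩]
      · rw [if_neg hkl, if_neg hkl, iota_eq_congruenceMap, map_zero, ite_self]
    simp only [hterm, Finset.sum_ite_irrel, Finset.sum_const_zero, Finset.sum_ite_eq',
      Finset.mem_univ, if_true]

lemma iota_mem_SDDGplus {i j : Fin t} (hij : i < j) (hadj : G.Adj i j)
    {S : Matrix (Fin 2) (Fin 2) ℝ} (hS : S.PosSemidef) (hS_nonneg : ∀ k l, 0 ≤ S k l) :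
    iota i j S ∈ SDDGplus G :=
  ⟨iota_mem_SDDG hij hadj hS, isSymm_iota i j hS.isHermitian, iota_nonneg i j hS_nonneg⟩

lemma sum_iota_apply_of_lt (p : Fin t → Fin t → Prop) [DecidableRel p]
    (S : Fin t → Fin t → Matrix (Fin 2) (Fin 2) ℝ) {i j : Fin t} (hij : i < j) (hp : p i j) :
    (∑ k, ∑ l, if k < l ∧ p k l then iota k l (S k l) else 0) i j = S i j 0 1 := by
  have hterm (k l : Fin t) :
      (if k < l ∧ p k l then iota k l (S k l) else 0) i j =
        if i = k then if j = l then S k l 0 1 else 0 else 0 := by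
    by_cases hkl : k < l ∧ p k l
    · rw [if_pos hkl, iota_apply_of_lt hij hkl.1, ite_and]
    · rw [if_neg hkl, ← ite_and, if_neg, Matrix.zero_apply]
      rintro ⟨rfl, rfl⟩
      exact hkl ⟨hij, hp⟩
  simp only [Matrix.sum_apply, hterm, Finset.sum_ite_irrel, Finset.sum_const_zero,
    Finset.sum_ite_eq, Finset.mem_univ, if_true]

lemma congruenceMap_mem_rankOneCone_seg {X : Matrix (Fin t) (Fin t) ℝ} (hX : X ∈ SDDGplus G)
    (U : Matrix (Fin t) (Fin n) ℝ) : congruenceMap U X ∈ rankOneCone (seg G U) := by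
  classical
  obtain ⟨⟨S, hS, rfl⟩, -, hnonneg⟩ := hX
  simp only [map_sum]
  refine sum_mem fun i _ => sum_mem fun j _ => ?_
  split_ifs with hij
  · have h01 : 0 ≤ S i j 0 1 :=
      (hnonneg i j).trans_eq (sum_iota_apply_of_lt G.Adj S hij.1 hij.2)
    have hsub : segment ℝ (U i) (U j) ⊆ seg G U := fun v hv => ⟨i, j, hij.2, hv⟩
    exact rankOneCone_mono hsub
      (congruenceMap_iota_mem_rankOneCone_segment (hS i j) h01 U i j)
  · rw [map_zero]
    exact zero_mem _

lemma vecMulVec_self_mem_map_sddgPlusCone {i j : Fin t} (hadj : G.Adj i j) {a b : ℝ}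
    (ha : 0 ≤ a) (hb : 0 ≤ b) (U : Matrix (Fin t) (Fin n) ℝ) :
    vecMulVec (a • U i + b • U j) (a • U i + b • U j) ∈
      (sddgPlusCone G).map (congruenceMap U) := by
  wlog hij : i < j generalizing i j a b
  · rw [add_comm]
    exact this hadj.symm hb ha (hadj.ne'.lt_of_le (not_lt.1 hij))
  have hpsd : (vecMulVec ![a, b] ![a, b]).PosSemidef := by
    simpa only [star_trivial] using posSemidef_vecMulVec_self_star ![a, b]
  have hvec : ∀ k, 0 ≤ ![a, b] k := Fin.forall_fin_two.2 ⟨ha, hb⟩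
  refine PointedCone.mem_map.2
    ⟨_, iota_mem_SDDGplus hij hadj hpsd fun k l => mul_nonneg (hvec k) (hvec l), ?_⟩
  rw [congruenceMap_iota, congruenceMap_vecMulVec_self, vecMul_eq_sum, Fin.sum_univ_two]
  rfl

variable (G)

theorem SDDGplusU_eq_rankOneCone_seg (U : Matrix (Fin t) (Fin n) ℝ) :
    SDDGplusU G U = rankOneCone (seg G U) := by
  refine Subset.antisymm ?_ ?_
  · rintro _ ⟨X, hX, rfl⟩
    exact congruenceMap_mem_rankOneCone_seg hX U
  · rw [SDDGplusU_eq_map_sddgPlusCone]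
    refine rankOneCone_le_iff.2 ?_
    rintro _ ⟨i, j, hadj, a, b, ha, hb, -, rfl⟩
    exact vecMulVec_self_mem_map_sddgPlusCone hadj ha hb U

end SDDG

theorem SDDGplusU_mono_of_seg_subset_general {t t' n : ℕ}
    (G : SimpleGraph (Fin t)) (G' : SimpleGraph (Fin t'))
    (U : Matrix (Fin t) (Fin n) ℝ) (U' : Matrix (Fin t') (Fin n) ℝ)
    (hseg : seg G U ⊆ seg G' U') :
    SDDGplusU G U ⊆ SDDGplusU G' U' := by
  rw [SDDGplusU_eq_rankOneCone_seg, SDDGplusU_eq_rankOneCone_seg]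
  exact rankOneCone_mono hseg

/-- If `seg(G,U) ⊆ seg(G',U')` then `SDD^G₊(U) ⊆ SDD^{G'}₊(U')`. -/
theorem SDDGplusU_mono_of_seg_subset {t t' n : ℕ}
    (G : SimpleGraph (Fin t)) (G' : SimpleGraph (Fin t'))
    (U : Matrix (Fin t) (Fin n) ℝ) (U' : Matrix (Fin t') (Fin n) ℝ)
    (hU : ∀ i j, 0 ≤ U i j) (hUrow : ∀ i, ∑ j, U i j = 1)
    (hU' : ∀ i j, 0 ≤ U' i j) (hU'row : ∀ i, ∑ j, U' i j = 1)
    (hseg : seg G U ⊆ seg G' U') :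
    SDDGplusU G U ⊆ SDDGplusU G' U' :=
  SDDGplusU_mono_of_seg_subset_general G G' U U' hseg

end
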